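/- arXiv:2208.00643 — 3 statements merged into one kernel-verified Lean document; each statement's English description precedes it below -/
import Mathlib

section
/- Under the definitions below, for every k the SINR of the common stream at user k defined from the quantized received signal, γ_{c,k}^{orig} = P α_{ADC,k}² |h_k^H Φ_α f_0|² / (P α_{ADC,k}² Σ_{i=1}^K |h_k^H Φ_α f_i|² + QE_k + α_{ADC,k}² σ²), equals the reformulated expression γ_{c,k}(F) = α_{ADC,k} |h_k^H Φ_α f_0|² / (Σ_{i=0}^K |h_k^H Φ_α f_i|² − α_{ADC,k} |h_k^H Φ_α f_0|² + Σ_{i=0}^K f_i^H Φ_α Φ_β diag(h_k h_k^H) f_i + σ²/P). -/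
open Matrix

/-- `diagOf M` is the diagonal matrix whose diagonal coincides with that of `M`. -/
def diagOf {N : ℕ} (M : Matrix (Fin N) (Fin N) ℂ) : Matrix (Fin N) (Fin N) ℂ :=
  Matrix.diagonal fun n => M n n

/-- `outer u = u uᴴ`. -/
def outer {N : ℕ} (u : Fin N → ℂ) : Matrix (Fin N) (Fin N) ℂ :=
  Matrix.vecMulVec u (star u)

/-!
The total received power `hᴴ C_x h` is `P` times the sum of the stream powers `|hᴴ Φ_α f_i|²` plus
the DAC distortion. The distortion depends on `h` and on each `f_i` only through the squared moduli
of their entries, `P ∑_n α_n (1 - α_n) |h_n|² ∑_i |f_{i,n}|²`, so it may equally well be read as a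
quadratic form in the `f_i`. Since `α² + α (1 - α) = α`, the ADC quantization noise leaves every
distortion and noise term with the common factor `α`, and `P α` cancels from the quotient.
-/

section QuadraticForms

variable {m n R : Type*} [Fintype m] [Fintype n]

lemma star_dotProduct_mul_conjTranspose_mulVec [NonUnitalSemiring R] [StarRing R]
    (B : Matrix m n R) (u : m → R) :
    star u ⬝ᵥ (B * Bᴴ) *ᵥ u = (star u ᵥ* B) ⬝ᵥ star (star u ᵥ* B) := by
  rw [star_vecMul, star_star, ← mulVec_mulVec, dotProduct_mulVec]

lemma dotProduct_star_eq_sum_normSq (v : n → ℂ) :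
    v ⬝ᵥ star v = ((∑ i, Complex.normSq (v i) : ℝ) : ℂ) := by
  simp only [dotProduct, Pi.star_apply, Complex.star_def, Complex.mul_conj, Complex.ofReal_sum]

lemma star_dotProduct_precoded_covariance_mulVec {l : Type*} [Fintype l]
    (A : Matrix l m ℂ) (F : Matrix m n ℂ) (u : l → ℂ) :
    star u ⬝ᵥ (A * F * Fᴴ * Aᴴ) *ᵥ u =
      ((∑ i, Complex.normSq (star u ⬝ᵥ A *ᵥ F.col i) : ℝ) : ℂ) := by
  have hcol (i : n) : star u ⬝ᵥ A *ᵥ F.col i = (star u ᵥ* (A * F)) i := by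
    rw [dotProduct_mulVec, ← vecMul_vecMul]
    rfl
  simp only [hcol]
  rw [Matrix.mul_assoc (A * F), ← conjTranspose_mul, star_dotProduct_mul_conjTranspose_mulVec,
    dotProduct_star_eq_sum_normSq]

lemma star_dotProduct_diagonal_mulVec_comm [DecidableEq n] [CommSemiring R] [Star R]
    (d u v : n → R) :
    star u ⬝ᵥ diagonal (d * (v * star v)) *ᵥ u =
      star v ⬝ᵥ diagonal (d * (u * star u)) *ᵥ v := by
  simp only [dotProduct, mulVec_diagonal, Pi.mul_apply, Pi.star_apply]
  exact Finset.sum_congr rfl fun i _ => by ring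

end QuadraticForms

section Distortion

variable {N : ℕ} {ι : Type*} [Fintype ι]

lemma diagOf_smul (c : ℂ) (M : Matrix (Fin N) (Fin N) ℂ) : diagOf (c • M) = c • diagOf M := by
  simp only [diagOf, ← diagonal_smul]
  rfl

lemma diagonal_mul_diagOf_outer (d v : Fin N → ℂ) :
    diagonal d * diagOf (outer v) = diagonal (d * (v * star v)) :=
  diagonal_mul_diagonal d (v * star v)

lemma diagOf_mul_conjTranspose (F : Matrix (Fin N) ι ℂ) :
    diagOf (F * Fᴴ) = ∑ i, diagOf (outer (F.col i)) := by
  ext a b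
  rw [Matrix.sum_apply]
  by_cases hab : a = b
  · subst hab
    simp [diagOf, outer, mul_apply, vecMulVec_apply]
  · simp [diagOf, hab]

lemma star_dotProduct_diagonal_mul_diagOf_mulVec (d : Fin N → ℂ) (F : Matrix (Fin N) ι ℂ)
    (u : Fin N → ℂ) :
    star u ⬝ᵥ (diagonal d * diagOf (F * Fᴴ)) *ᵥ u =
      ∑ i, star (F.col i) ⬝ᵥ (diagonal d * diagOf (outer u)) *ᵥ F.col i := by
  simp only [diagOf_mul_conjTranspose, Matrix.mul_sum, sum_mulVec, dotProduct_sum,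
    diagonal_mul_diagOf_outer, star_dotProduct_diagonal_mulVec_comm d u]

end Distortion

lemma quantized_sinr_eq {k : Type*} [Field k] {P α : k} (hP : P ≠ 0) (hα : α ≠ 0)
    (common priv dist noise : k) :
    P * α ^ 2 * common /
        (P * α ^ 2 * priv
          + (α ^ 2 * (P * dist) + α * (1 - α) * (P * (common + priv) + P * dist + noise))
          + α ^ 2 * noise) =
      α * common / ((common + priv) - α * common + dist + noise / P) := by
  have hden :
      P * α ^ 2 * priv
          + (α ^ 2 * (P * dist) + α * (1 - α) * (P * (common + priv) + P * dist + noise))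
          + α ^ 2 * noise =
      P * α * ((common + priv) - α * common + dist + noise / P) := by
    field_simp
    ring
  have hnum : P * α ^ 2 * common = P * α * (α * common) := by ring
  rw [hden, hnum, mul_div_mul_left _ _ (mul_ne_zero hP hα)]

theorem common_stream_sinr_reformulation_general
    {N K : ℕ} (h : Fin N → ℂ) (f : Fin (K + 1) → Fin N → ℂ)
    (F : Matrix (Fin N) (Fin (K + 1)) ℂ) (hF : ∀ n i, F n i = f i n)
    (αD : Fin N → ℂ) (αA βA P σ2 : ℝ) (hαA : αA ≠ 0) (hβA : βA = 1 - αA) (hP : P ≠ 0)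
    (Φα Φβ : Matrix (Fin N) (Fin N) ℂ)
    (hΦα : Φα = diagonal αD) (hΦβ : Φβ = 1 - Φα)
    (RqDAC Cx : Matrix (Fin N) (Fin N) ℂ)
    (hR : RqDAC = Φα * Φβ * diagOf ((P : ℂ) • (F * Fᴴ)))
    (hC : Cx = (P : ℂ) • (Φα * F * Fᴴ * Φαᴴ) + RqDAC)
    (rqADC QE : ℂ)
    (hrq : rqADC = ((αA * βA : ℝ) : ℂ) * (star h ⬝ᵥ Cx *ᵥ h + (σ2 : ℂ)))
    (hQE : QE = ((αA ^ 2 : ℝ) : ℂ) * (star h ⬝ᵥ RqDAC *ᵥ h) + rqADC) :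
    ((P * αA ^ 2 * Complex.normSq (star h ⬝ᵥ Φα *ᵥ f 0) : ℝ) : ℂ) /
        (((P * αA ^ 2 * ∑ i : Fin K, Complex.normSq (star h ⬝ᵥ Φα *ᵥ f i.succ) : ℝ) : ℂ)
          + QE + ((αA ^ 2 * σ2 : ℝ) : ℂ)) =
      ((αA * Complex.normSq (star h ⬝ᵥ Φα *ᵥ f 0) : ℝ) : ℂ) /
        (((∑ i, Complex.normSq (star h ⬝ᵥ Φα *ᵥ f i) : ℝ) : ℂ)
          - ((αA * Complex.normSq (star h ⬝ᵥ Φα *ᵥ f 0) : ℝ) : ℂ)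
          + (∑ i, star (f i) ⬝ᵥ (Φα * Φβ * diagOf (outer h)) *ᵥ f i)
          + ((σ2 / P : ℝ) : ℂ)) := by
  have hcol (i : Fin (K + 1)) : F.col i = f i := funext fun n => hF n i
  have hΦ : Φα * Φβ = diagonal (αD * (1 - αD)) := by
    rw [hΦβ, hΦα, ← diagonal_one, diagonal_sub, diagonal_mul_diagonal]
    rfl
  have hdist : star h ⬝ᵥ RqDAC *ᵥ h =
      P * ∑ i, star (f i) ⬝ᵥ (Φα * Φβ * diagOf (outer h)) *ᵥ f i := by
    rw [hR, hΦ, diagOf_smul, Matrix.mul_smul, smul_mulVec, dotProduct_smul, smul_eq_mul,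
      star_dotProduct_diagonal_mul_diagOf_mulVec]
    simp only [hcol]
  have hpower : star h ⬝ᵥ Cx *ᵥ h =
      P * ((∑ i, Complex.normSq (star h ⬝ᵥ Φα *ᵥ f i) : ℝ) : ℂ) +
        P * ∑ i, star (f i) ⬝ᵥ (Φα * Φβ * diagOf (outer h)) *ᵥ f i := by
    rw [hC, add_mulVec, smul_mulVec, dotProduct_add, dotProduct_smul, smul_eq_mul,
      star_dotProduct_precoded_covariance_mulVec, hdist]
    simp only [hcol]
  rw [hQE, hrq, hdist, hpower, hβA,
    Fin.sum_univ_succ fun i => Complex.normSq (star h ⬝ᵥ Φα *ᵥ f i)]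
  push_cast
  exact quantized_sinr_eq (mod_cast hP) (mod_cast hαA) _ _ _ _

/-- The SINR of the common stream at user `k` defined from the quantized received signal equals
the reformulated expression `γ_{c,k}(F)` of the paper. -/
theorem common_stream_sinr_reformulation
    (N K : ℕ) (hN : 0 < N) (hK : 0 < K)
    (h : Fin K → Fin N → ℂ) (f : Fin (K + 1) → Fin N → ℂ)
    (F : Matrix (Fin N) (Fin (K + 1)) ℂ) (hF : ∀ n i, F n i = f i n)
    (αD : Fin N → ℝ) (hαD : ∀ n, αD n ∈ Set.Ioc (0 : ℝ) 1)
    (αA : Fin K → ℝ) (hαA : ∀ k, αA k ∈ Set.Ioc (0 : ℝ) 1)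
    (βA : Fin K → ℝ) (hβA : ∀ k, βA k = 1 - αA k)
    (P σ2 : ℝ) (hP : 0 < P) (hσ2 : 0 < σ2)
    (Φα Φβ : Matrix (Fin N) (Fin N) ℂ)
    (hΦα : Φα = Matrix.diagonal fun n => (αD n : ℂ))
    (hΦβ : Φβ = 1 - Φα)
    (RqDAC Cx : Matrix (Fin N) (Fin N) ℂ)
    (hR : RqDAC = Φα * Φβ * diagOf ((P : ℂ) • (F * Fᴴ)))
    (hC : Cx = (P : ℂ) • (Φα * F * Fᴴ * Φαᴴ) + RqDAC)
    (rqADC QE : Fin K → ℂ)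
    (hrq : ∀ k, rqADC k = ((αA k * βA k : ℝ) : ℂ) *
      (star (h k) ⬝ᵥ Cx.mulVec (h k) + (σ2 : ℂ)))
    (hQE : ∀ k, QE k = ((αA k ^ 2 : ℝ) : ℂ) *
      (star (h k) ⬝ᵥ RqDAC.mulVec (h k)) + rqADC k) :
    ∀ k : Fin K,
      ((P * αA k ^ 2 * Complex.normSq (star (h k) ⬝ᵥ Φα.mulVec (f 0)) : ℝ) : ℂ) /
          (((P * αA k ^ 2 *
              ∑ i : Fin K, Complex.normSq (star (h k) ⬝ᵥ Φα.mulVec (f i.succ)) : ℝ) : ℂ)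
            + QE k + ((αA k ^ 2 * σ2 : ℝ) : ℂ)) =
        ((αA k * Complex.normSq (star (h k) ⬝ᵥ Φα.mulVec (f 0)) : ℝ) : ℂ) /
          (((∑ i : Fin (K + 1), Complex.normSq (star (h k) ⬝ᵥ Φα.mulVec (f i)) : ℝ) : ℂ)
            - ((αA k * Complex.normSq (star (h k) ⬝ᵥ Φα.mulVec (f 0)) : ℝ) : ℂ)
            + (∑ i : Fin (K + 1),
                star (f i) ⬝ᵥ (Φα * Φβ * diagOf (outer (h k))).mulVec (f i))
            + ((σ2 / P : ℝ) : ℂ)) := fun k =>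
  common_stream_sinr_reformulation_general (h k) f F hF _ _ _ P σ2 (hαA k).1.ne' (hβA k) hP.ne'
    Φα Φβ hΦα hΦβ RqDAC Cx hR hC _ _ (hrq k) (hQE k)
end

section
/- (Lemma 1, algebraic form.) Let A_{c,1},…,A_{c,K}, B_{c,1},…,B_{c,K}, A_1,…,A_K, B_1,…,B_K be Hermitian positive definite matrices in ℂ^{n×n}, let τ > 0, and let w ∈ ℂ^n be nonzero. With r_k(w), μ_k(w), λ_num(w), λ_den(w), λ(w), A_KKT(w), B_KKT(w) defined as in the context, the stationarity equation Σ_{k=1}^K μ_k(w)·( A_{c,k} w/(w^H A_{c,k} w) − B_{c,k} w/(w^H B_{c,k} w) ) + Σ_{k=1}^K ( A_k w/(w^H A_k w) − B_k w/(w^H B_k w) ) = 0 holds if and only if A_KKT(w)·w = λ(w)·B_KKT(w)·w, equivalently (since B_KKT(w) is invertible) B_KKT(w)^{−1} A_KKT(w)·w = λ(w)·w; i.e., the first-order optimality condition of the smoothed sum-spectral-efficiency maximization is a nonlinear eigenvalue problem. -/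
open Matrix
open scoped ComplexOrder

/-!
The `A`-terms and the `B`-terms of the stationarity equation are the vectors `P w` and `Q w`, where
`P` and `Q` are the bracketed sums in `A_KKT = λ_num P` and `B_KKT = λ_den Q`. As `λ_num ≠ 0` and
`λ = λ_num / λ_den`, the factor `λ` exchanges the scaling of `B_KKT` for that of `A_KKT`, so
`P w = Q w` is the same as `A_KKT w = λ B_KKT w`. Finally `B_KKT` is a positive combination of
positive definite matrices, hence invertible.
-/

section Algebra

variable {m n κ R : Type*} [Fintype n] [Fintype κ]

lemma sum_smul_mulVec_sub [Ring R] (a b : κ → R) (M N : κ → Matrix m n R) (v : n → R) :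
    ∑ k, (a k • M k *ᵥ v - b k • N k *ᵥ v) =
      (∑ k, a k • M k) *ᵥ v - (∑ k, b k • N k) *ᵥ v := by
  simp only [sum_mulVec, smul_mulVec, Finset.sum_sub_distrib]

lemma sum_smul_mulVec_sub_add_sum_eq_zero_iff [Ring R] (μ a b c d : κ → R)
    (M N P Q : κ → Matrix m n R) (v : n → R) :
    ∑ k, μ k • (a k • M k *ᵥ v - b k • N k *ᵥ v) + ∑ k, (c k • P k *ᵥ v - d k • Q k *ᵥ v) = 0 ↔
      (∑ k, (μ k * a k) • M k + ∑ k, c k • P k) *ᵥ v =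
        (∑ k, (μ k * b k) • N k + ∑ k, d k • Q k) *ᵥ v := by
  simp only [smul_sub, smul_smul, sum_smul_mulVec_sub, add_mulVec]
  rw [sub_add_sub_comm, sub_eq_zero]

lemma smul_mulVec_eq_div_smul_smul_mulVec_iff [DivisionRing R] {a b : R} (ha : a ≠ 0)
    (hb : b ≠ 0) (M N : Matrix m n R) (v : n → R) :
    (a • M) *ᵥ v = (a / b) • (b • N) *ᵥ v ↔ M *ᵥ v = N *ᵥ v := by
  rw [smul_mulVec, smul_mulVec, smul_smul, div_mul_cancel₀ a hb,
    (smul_right_injective _ ha).eq_iff]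

lemma inv_mul_mulVec_eq_smul_iff [CommRing R] [DecidableEq n] {N : Matrix n n R}
    (hN : IsUnit N) (M : Matrix n n R) (c : R) (v : n → R) :
    (N⁻¹ * M) *ᵥ v = c • v ↔ M *ᵥ v = c • N *ᵥ v := by
  rw [← (mulVec_injective_of_isUnit hN).eq_iff, mulVec_mulVec, mulVec_smul,
    mul_nonsing_inv_cancel_left _ _ ((isUnit_iff_isUnit_det N).mp hN)]

end Algebra

lemma posDef_sum_smul_add_sum_smul {ι κ R : Type*} [Fintype κ] [Nonempty κ]
    [CommRing R] [PartialOrder R] [StarRing R] [StarOrderedRing R] [IsStrictOrderedRing R]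
    {a b : κ → R} {M N : κ → Matrix ι ι R} (ha : ∀ k, 0 ≤ a k) (hM : ∀ k, (M k).PosSemidef)
    (hb : ∀ k, 0 < b k) (hN : ∀ k, (N k).PosDef) :
    (∑ k, a k • M k + ∑ k, b k • N k).PosDef :=
  PosDef.posSemidef_add (posSemidef_sum _ fun k _ ↦ (hM k).smul (ha k))
    (posDef_sum Finset.univ_nonempty fun k _ ↦ (hN k).smul (hb k))

lemma sum_rpow_pos {κ : Type*} [Fintype κ] [Nonempty κ] {r : κ → ℝ} (hr : ∀ k, 0 < r k) (p : ℝ) :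
    0 < ∑ k, r k ^ p :=
  Finset.sum_pos (fun k _ ↦ Real.rpow_pos_of_pos (hr k) p) Finset.univ_nonempty

/-- The smoothed rates have `p = -1 / (τ ln 2)`, `q = -1 / τ`, `s = τ / ln 2` and
`c = 1 / (K ln 2)`. -/
theorem lemma1_algebraic_form_general
    {𝕜 ι κ : Type*} [RCLike 𝕜] [Fintype ι] [DecidableEq ι] [Fintype κ] [Nonempty κ]
    {Ac Bc A B : κ → Matrix ι ι 𝕜} {w : ι → 𝕜}
    (hAc : ∀ k, 0 < RCLike.re (star w ⬝ᵥ Ac k *ᵥ w))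
    (hBc : ∀ k, 0 < RCLike.re (star w ⬝ᵥ Bc k *ᵥ w)) (hBcH : ∀ k, (Bc k).PosSemidef)
    (hA : ∀ k, RCLike.re (star w ⬝ᵥ A k *ᵥ w) ≠ 0) (hBH : ∀ k, (B k).PosDef)
    {qAc qBc qA qB : κ → ℝ}
    (hqAc : ∀ k, qAc k = RCLike.re (star w ⬝ᵥ Ac k *ᵥ w))
    (hqBc : ∀ k, qBc k = RCLike.re (star w ⬝ᵥ Bc k *ᵥ w))
    (hqA : ∀ k, qA k = RCLike.re (star w ⬝ᵥ A k *ᵥ w))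
    (hqB : ∀ k, qB k = RCLike.re (star w ⬝ᵥ B k *ᵥ w))
    {r μ : κ → ℝ} {p q s c : ℝ} (hc : 0 < c)
    (hr : ∀ k, r k = qAc k / qBc k) (hμ : ∀ k, μ k = r k ^ p / ∑ l, r l ^ p)
    {lamNum lamDen lam : ℝ} (hlamNum : lamNum = ∏ k, qA k)
    (hlamDen : lamDen = (c * ∑ k, r k ^ q) ^ s * ∏ k, qB k) (hlam : lam = lamNum / lamDen)
    {AKKT BKKT : Matrix ι ι 𝕜}
    (hAKKT : AKKT = (lamNum : 𝕜) •
      (∑ k, ((μ k / qAc k : ℝ) : 𝕜) • Ac k + ∑ k, (((qA k)⁻¹ : ℝ) : 𝕜) • A k))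
    (hBKKT : BKKT = (lamDen : 𝕜) •
      (∑ k, ((μ k / qBc k : ℝ) : 𝕜) • Bc k + ∑ k, (((qB k)⁻¹ : ℝ) : 𝕜) • B k)) :
    (∑ k, (μ k : 𝕜) • ((((qAc k)⁻¹ : ℝ) : 𝕜) • Ac k *ᵥ w - (((qBc k)⁻¹ : ℝ) : 𝕜) • Bc k *ᵥ w)
          + ∑ k, ((((qA k)⁻¹ : ℝ) : 𝕜) • A k *ᵥ w - (((qB k)⁻¹ : ℝ) : 𝕜) • B k *ᵥ w) = 0
        ↔ AKKT *ᵥ w = (lam : 𝕜) • BKKT *ᵥ w) ∧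
      (AKKT *ᵥ w = (lam : 𝕜) • BKKT *ᵥ w ↔ (BKKT⁻¹ * AKKT) *ᵥ w = (lam : 𝕜) • w) := by
  have hw : w ≠ 0 := by
    rintro rfl
    simpa using hBc (Classical.arbitrary κ)
  have hqAc_pos k : 0 < qAc k := hqAc k ▸ hAc k
  have hqBc_pos k : 0 < qBc k := hqBc k ▸ hBc k
  have hqB_pos k : 0 < qB k := hqB k ▸ (hBH k).re_dotProduct_pos hw
  have hr_pos k : 0 < r k := hr k ▸ div_pos (hqAc_pos k) (hqBc_pos k)
  have hμ_pos k : 0 < μ k :=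
    hμ k ▸ div_pos (Real.rpow_pos_of_pos (hr_pos k) p) (sum_rpow_pos hr_pos p)
  have hNum : lamNum ≠ 0 := hlamNum ▸ Finset.prod_ne_zero_iff.mpr fun k _ ↦ hqA k ▸ hA k
  have hDen : 0 < lamDen := hlamDen ▸ mul_pos
    (Real.rpow_pos_of_pos (mul_pos hc (sum_rpow_pos hr_pos q)) s)
    (Finset.prod_pos fun k _ ↦ hqB_pos k)
  have hBKKT_posDef : BKKT.PosDef := hBKKT ▸ (posDef_sum_smul_add_sum_smul
    (fun k ↦ RCLike.ofReal_nonneg.mpr (div_pos (hμ_pos k) (hqBc_pos k)).le) hBcH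
    (fun k ↦ RCLike.ofReal_pos.mpr (inv_pos.mpr (hqB_pos k))) hBH).smul
      (RCLike.ofReal_pos.mpr hDen)
  refine ⟨?_, (inv_mul_mulVec_eq_smul_iff hBKKT_posDef.isUnit _ _ _).symm⟩
  rw [hAKKT, hBKKT, hlam, RCLike.ofReal_div, smul_mulVec_eq_div_smul_smul_mulVec_iff
    (RCLike.ofReal_ne_zero.mpr hNum) (RCLike.ofReal_ne_zero.mpr hDen.ne'),
    sum_smul_mulVec_sub_add_sum_eq_zero_iff]
  simp only [div_eq_mul_inv, RCLike.ofReal_mul]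

/-- (Lemma 1, algebraic form.) The stationarity equation of the smoothed sum-spectral-efficiency
objective holds iff `A_KKT(w) w = λ(w) B_KKT(w) w`, equivalently (since `B_KKT(w)` is
invertible) `B_KKT(w)⁻¹ A_KKT(w) w = λ(w) w`: the first-order optimality condition is a
nonlinear eigenvalue problem. -/
theorem lemma1_algebraic_form
    (n K : ℕ) (hn : 0 < n) (hK : 0 < K)
    (Ac Bc A B : Fin K → Matrix (Fin n) (Fin n) ℂ)
    (hAcH : ∀ k, (Ac k).PosDef) (hBcH : ∀ k, (Bc k).PosDef)
    (hAH : ∀ k, (A k).PosDef) (hBH : ∀ k, (B k).PosDef)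
    (τ : ℝ) (hτ : 0 < τ)
    (w : Fin n → ℂ) (hw : w ≠ 0)
    (qAc qBc qA qB : Fin K → ℝ)
    (hqAc : ∀ k, qAc k = (star w ⬝ᵥ (Ac k).mulVec w).re)
    (hqBc : ∀ k, qBc k = (star w ⬝ᵥ (Bc k).mulVec w).re)
    (hqA : ∀ k, qA k = (star w ⬝ᵥ (A k).mulVec w).re)
    (hqB : ∀ k, qB k = (star w ⬝ᵥ (B k).mulVec w).re)
    (r μ : Fin K → ℝ)
    (hr : ∀ k, r k = qAc k / qBc k)
    (hμ : ∀ k, μ k = r k ^ (-(1 / (τ * Real.log 2))) /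
      ∑ l, r l ^ (-(1 / (τ * Real.log 2))))
    (lamNum lamDen lam : ℝ)
    (hlamNum : lamNum = ∏ k, qA k)
    (hlamDen : lamDen =
      ((1 / (K * Real.log 2)) * ∑ k, r k ^ (-(1 / τ))) ^ (τ / Real.log 2) * ∏ k, qB k)
    (hlam : lam = lamNum / lamDen)
    (AKKT BKKT : Matrix (Fin n) (Fin n) ℂ)
    (hAKKT : AKKT = (lamNum : ℂ) •
      (∑ k, ((μ k / qAc k : ℝ) : ℂ) • Ac k + ∑ k, (((qA k)⁻¹ : ℝ) : ℂ) • A k))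
    (hBKKT : BKKT = (lamDen : ℂ) •
      (∑ k, ((μ k / qBc k : ℝ) : ℂ) • Bc k + ∑ k, (((qB k)⁻¹ : ℝ) : ℂ) • B k)) :
    ((∑ k, (μ k : ℂ) • ((((qAc k)⁻¹ : ℝ) : ℂ) • (Ac k).mulVec w
            - (((qBc k)⁻¹ : ℝ) : ℂ) • (Bc k).mulVec w)
          + ∑ k, ((((qA k)⁻¹ : ℝ) : ℂ) • (A k).mulVec w
            - (((qB k)⁻¹ : ℝ) : ℂ) • (B k).mulVec w)) = 0
        ↔ AKKT.mulVec w = (lam : ℂ) • BKKT.mulVec w) ∧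
      (AKKT.mulVec w = (lam : ℂ) • BKKT.mulVec w
        ↔ (BKKT⁻¹ * AKKT).mulVec w = (lam : ℂ) • w) := by
  have : Nonempty (Fin K) := Fin.pos_iff_nonempty.mp hK
  exact lemma1_algebraic_form_general (fun k ↦ (hAcH k).re_dotProduct_pos hw)
    (fun k ↦ (hBcH k).re_dotProduct_pos hw) (fun k ↦ (hBcH k).posSemidef)
    (fun k ↦ ((hAH k).re_dotProduct_pos hw).ne') hBH hqAc hqBc hqA hqB (by positivity) hr hμ
    hlamNum hlamDen hlam hAKKT hBKKT
end

section
/- (Key identity behind Proposition 1.) Let A_{c,1},…,A_{c,K}, B_{c,1},…,B_{c,K}, A_1,…,A_K, B_1,…,B_K be Hermitian positive definite matrices in ℂ^{n×n}, let τ > 0, and let w ∈ ℂ^n be nonzero. Then w^H A_KKT(w) w = (K+1)·λ_num(w) and w^H B_KKT(w) w = (K+1)·λ_den(w). Consequently, if w satisfies the nonlinear eigenvalue equation A_KKT(w)·w = λ̂·B_KKT(w)·w for some scalar λ̂, then λ̂ = λ(w) = λ_num(w)/λ_den(w); i.e., the eigenvalue associated with any eigenvector of B_KKT(w)^{−1}A_KKT(w)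 equals the value λ(w), so the leading eigenvector attains the largest value of λ among all such stationary points. -/
open Matrix
open scoped ComplexOrder

/-!
`A_KKT(w)` and `B_KKT(w)` are linear combinations of positive definite matrices in which every
matrix is divided by its own quadratic form at `w`. Evaluating the combination at `w` therefore
leaves only the weights, and these add up to `∑ μ_k + K = K + 1`. Pairing
`A_KKT(w) w = λ̂ B_KKT(w) w` with `w` and cancelling `K + 1` gives `λ_num(w) = λ̂ λ_den(w)`.
-/

theorem dotProduct_sum_div_smul_mulVec {F ι m n : Type*} [Semifield F] [Fintype m] [Fintype n]
    (s : Finset ι) (c : ι → F) {M : ι → Matrix m n F} {v : m → F} {w : n → F}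
    (hM : ∀ k ∈ s, v ⬝ᵥ M k *ᵥ w ≠ 0) :
    v ⬝ᵥ (∑ k ∈ s, (c k / (v ⬝ᵥ M k *ᵥ w)) • M k) *ᵥ w = ∑ k ∈ s, c k := by
  simp only [sum_mulVec, smul_mulVec, dotProduct_sum, dotProduct_smul, smul_eq_mul]
  exact Finset.sum_congr rfl fun k hk => div_mul_cancel₀ _ (hM k hk)

theorem eq_div_of_mulVec_eq_smul_mulVec {F m n : Type*} [Semifield F] [Fintype m] [Fintype n]
    {A B : Matrix m n F} {v : m → F} {w : n → F} {s a b x : F}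
    (hA : v ⬝ᵥ A *ᵥ w = s * a) (hB : v ⬝ᵥ B *ᵥ w = s * b) (hs : s ≠ 0) (hb : b ≠ 0)
    (hx : A *ᵥ w = x • B *ᵥ w) : x = a / b := by
  rw [eq_div_iff hb]
  refine mul_left_cancel₀ hs ?_
  calc s * (x * b) = x * (s * b) := mul_left_comm s x b
    _ = v ⬝ᵥ A *ᵥ w := by rw [hx, dotProduct_smul, hB, smul_eq_mul]
    _ = s * a := hA

theorem sum_rpow_pos_s17 {ι : Type*} {s : Finset ι} (hs : s.Nonempty) {r : ι → ℝ}
    (hr : ∀ k ∈ s, 0 < r k) (e : ℝ) : 0 < ∑ k ∈ s, r k ^ e :=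
  Finset.sum_pos (fun k hk => Real.rpow_pos_of_pos (hr k hk) e) hs

namespace RSMA

variable {𝕜 ι κ m : Type*} [RCLike 𝕜] [Fintype m]

/-- The quadratic form `wᴴ M w`, encoded as a real number by taking the real part, which loses
nothing when `M` is Hermitian. -/
noncomputable def reQuadForm (M : Matrix m m 𝕜) (w : m → 𝕜) : ℝ :=
  RCLike.re (star w ⬝ᵥ M *ᵥ w)

theorem reQuadForm_pos {M : Matrix m m 𝕜} {w : m → 𝕜} (hM : 0 < star w ⬝ᵥ M *ᵥ w) :
    0 < reQuadForm M w :=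
  (RCLike.pos_iff.mp hM).1

theorem ofReal_reQuadForm {M : Matrix m m 𝕜} {w : m → 𝕜} (hM : 0 ≤ star w ⬝ᵥ M *ᵥ w) :
    (reQuadForm M w : 𝕜) = star w ⬝ᵥ M *ᵥ w :=
  RCLike.conj_eq_iff_re.mp (RCLike.conj_eq_iff_im.mpr (RCLike.nonneg_iff.mp hM).2)

/-- The Rayleigh quotients `r_k(w)` whose logarithms are the common-stream rates. -/
noncomputable def commonRatio (Ac Bc : ι → Matrix m m 𝕜) (w : m → 𝕜) (k : ι) : ℝ :=
  reQuadForm (Ac k) w / reQuadForm (Bc k) w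

theorem commonRatio_pos {Ac Bc : ι → Matrix m m 𝕜} {w : m → 𝕜} {k : ι}
    (hAc : 0 < star w ⬝ᵥ Ac k *ᵥ w) (hBc : 0 < star w ⬝ᵥ Bc k *ᵥ w) :
    0 < commonRatio Ac Bc w k :=
  div_pos (reQuadForm_pos hAc) (reQuadForm_pos hBc)

variable [Fintype ι] [Fintype κ]

/-- The weights `μ_k` that differentiating the LogSumExp-smoothed minimum of the common-stream
rates puts on the individual users, as a function of the ratios `r_k`. -/
noncomputable def logSumExpWeight (τ : ℝ) (r : ι → ℝ) (k : ι) : ℝ :=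
  r k ^ (-(1 / (τ * Real.log 2))) / ∑ l, r l ^ (-(1 / (τ * Real.log 2)))

/-- The numerator `λ_num(w)` of the objective `λ(w)`. -/
noncomputable def lamNum (A : ι → Matrix m m 𝕜) (w : m → 𝕜) : ℝ :=
  ∏ k, reQuadForm (A k) w

/-- The denominator `λ_den(w)` of the objective `λ(w)`, with the ratios `r_k(w)` passed as `r`. -/
noncomputable def lamDen (τ : ℝ) (r : ι → ℝ) (B : ι → Matrix m m 𝕜) (w : m → 𝕜) : ℝ :=
  ((1 / (Fintype.card ι * Real.log 2)) * ∑ k, r k ^ (-(1 / τ))) ^ (τ / Real.log 2) *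
    ∏ k, reQuadForm (B k) w

/-- The common shape of `A_KKT(w)` and `B_KKT(w)`: `c` times the sum of the `C k` and the `P k`,
each divided by its quadratic form at `w`, with weight `μ k` on the common-stream matrix `C k`. -/
noncomputable def kktMatrix (c : ℝ) (μ : ι → ℝ) (C : ι → Matrix m m 𝕜) (P : κ → Matrix m m 𝕜)
    (w : m → 𝕜) : Matrix m m 𝕜 :=
  (c : 𝕜) • (∑ k, ((μ k / reQuadForm (C k) w : ℝ) : 𝕜) • C k +
    ∑ k, (((reQuadForm (P k) w)⁻¹ : ℝ) : 𝕜) • P k)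

/-- The matrix `A_KKT(w)`, whose weights depend on `Bc` through the ratios `r_k(w)`. -/
noncomputable def aKKT (τ : ℝ) (Ac Bc A : ι → Matrix m m 𝕜) (w : m → 𝕜) : Matrix m m 𝕜 :=
  kktMatrix (lamNum A w) (logSumExpWeight τ (commonRatio Ac Bc w)) Ac A w

/-- The matrix `B_KKT(w)`, with the same weights `μ_k(w)` as `aKKT`. -/
noncomputable def bKKT (τ : ℝ) (Ac Bc B : ι → Matrix m m 𝕜) (w : m → 𝕜) : Matrix m m 𝕜 :=
  kktMatrix (lamDen τ (commonRatio Ac Bc w) B w) (logSumExpWeight τ (commonRatio Ac Bc w)) Bc B w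

theorem sum_logSumExpWeight [Nonempty ι] (τ : ℝ) {r : ι → ℝ} (hr : ∀ k, 0 < r k) :
    ∑ k, logSumExpWeight τ r k = 1 := by
  simp only [logSumExpWeight]
  rw [← Finset.sum_div, div_self (sum_rpow_pos_s17 Finset.univ_nonempty (fun k _ => hr k) _).ne']

theorem lamDen_pos [Nonempty ι] (τ : ℝ) {r : ι → ℝ} {B : ι → Matrix m m 𝕜} {w : m → 𝕜}
    (hr : ∀ k, 0 < r k) (hB : ∀ k, 0 < star w ⬝ᵥ B k *ᵥ w) : 0 < lamDen τ r B w := by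
  have hsum := sum_rpow_pos_s17 Finset.univ_nonempty (fun k _ => hr k) (-(1 / τ))
  have hprod : 0 < ∏ k, reQuadForm (B k) w := Finset.prod_pos fun k _ => reQuadForm_pos (hB k)
  unfold lamDen
  positivity

theorem dotProduct_kktMatrix_mulVec (c : ℝ) (μ : ι → ℝ) {C : ι → Matrix m m 𝕜}
    {P : κ → Matrix m m 𝕜} {w : m → 𝕜} (hC : ∀ k, 0 < star w ⬝ᵥ C k *ᵥ w)
    (hP : ∀ k, 0 < star w ⬝ᵥ P k *ᵥ w) :
    star w ⬝ᵥ kktMatrix c μ C P w *ᵥ w = (((∑ k, μ k : ℝ) : 𝕜) + Fintype.card κ) * c := by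
  have hsumC := dotProduct_sum_div_smul_mulVec Finset.univ (fun k => (μ k : 𝕜))
    fun k _ => (hC k).ne'
  have hsumP := dotProduct_sum_div_smul_mulVec Finset.univ (fun _ => (1 : 𝕜))
    fun k _ => (hP k).ne'
  simp only [one_div, Finset.sum_const, Finset.card_univ, nsmul_eq_mul, mul_one] at hsumP
  simp only [kktMatrix, RCLike.ofReal_div, RCLike.ofReal_inv, RCLike.ofReal_sum,
    ofReal_reQuadForm (hC _).le, ofReal_reQuadForm (hP _).le, smul_mulVec, add_mulVec,
    dotProduct_smul, dotProduct_add, hsumC, hsumP, smul_eq_mul]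
  exact mul_comm _ _

end RSMA

open RSMA in
theorem eigenvalue_equals_lambda_general {𝕜 ι m : Type*} [RCLike 𝕜] [Fintype ι] [Nonempty ι]
    [Fintype m] {Ac Bc A B : ι → Matrix m m 𝕜} {w : m → 𝕜}
    (hAc : ∀ k, 0 < star w ⬝ᵥ Ac k *ᵥ w) (hBc : ∀ k, 0 < star w ⬝ᵥ Bc k *ᵥ w)
    (hA : ∀ k, 0 < star w ⬝ᵥ A k *ᵥ w) (hB : ∀ k, 0 < star w ⬝ᵥ B k *ᵥ w)
    {τ : ℝ} (_hτ : τ ≠ 0) :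
    star w ⬝ᵥ aKKT τ Ac Bc A w *ᵥ w = ((Fintype.card ι : 𝕜) + 1) * (lamNum A w : 𝕜) ∧
      star w ⬝ᵥ bKKT τ Ac Bc B w *ᵥ w =
        ((Fintype.card ι : 𝕜) + 1) * (lamDen τ (commonRatio Ac Bc w) B w : 𝕜) ∧
      ∀ lamHat : 𝕜, aKKT τ Ac Bc A w *ᵥ w = lamHat • bKKT τ Ac Bc B w *ᵥ w →
        lamHat = ((lamNum A w / lamDen τ (commonRatio Ac Bc w) B w : ℝ) : 𝕜) := by
  have hr : ∀ k, 0 < commonRatio Ac Bc w k := fun k => commonRatio_pos (hAc k) (hBc k)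
  have hformA : star w ⬝ᵥ aKKT τ Ac Bc A w *ᵥ w = ((Fintype.card ι : 𝕜) + 1) * lamNum A w := by
    rw [aKKT, dotProduct_kktMatrix_mulVec _ _ hAc hA, sum_logSumExpWeight τ hr,
      RCLike.ofReal_one, add_comm]
  have hformB : star w ⬝ᵥ bKKT τ Ac Bc B w *ᵥ w =
      ((Fintype.card ι : 𝕜) + 1) * lamDen τ (commonRatio Ac Bc w) B w := by
    rw [bKKT, dotProduct_kktMatrix_mulVec _ _ hBc hB, sum_logSumExpWeight τ hr,
      RCLike.ofReal_one, add_comm]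
  refine ⟨hformA, hformB, fun lamHat heig => ?_⟩
  rw [RCLike.ofReal_div]
  exact eq_div_of_mulVec_eq_smul_mulVec hformA hformB (Nat.cast_add_one_ne_zero _)
    (RCLike.ofReal_ne_zero.mpr (lamDen_pos τ hr hB).ne') heig

/-- (Key identity behind Proposition 1.) `wᴴ A_KKT(w) w = (K+1) λ_num(w)` and
`wᴴ B_KKT(w) w = (K+1) λ_den(w)`; consequently, if `A_KKT(w) w = λ̂ B_KKT(w) w` for some scalar
`λ̂`, then `λ̂ = λ(w) = λ_num(w)/λ_den(w)`. -/
theorem eigenvalue_equals_lambda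
    (n K : ℕ) (hn : 0 < n) (hK : 0 < K)
    (Ac Bc A B : Fin K → Matrix (Fin n) (Fin n) ℂ)
    (hAcH : ∀ k, (Ac k).PosDef) (hBcH : ∀ k, (Bc k).PosDef)
    (hAH : ∀ k, (A k).PosDef) (hBH : ∀ k, (B k).PosDef)
    (τ : ℝ) (hτ : 0 < τ)
    (w : Fin n → ℂ) (hw : w ≠ 0)
    (qAc qBc qA qB : Fin K → ℝ)
    (hqAc : ∀ k, qAc k = (star w ⬝ᵥ (Ac k).mulVec w).re)
    (hqBc : ∀ k, qBc k = (star w ⬝ᵥ (Bc k).mulVec w).re)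
    (hqA : ∀ k, qA k = (star w ⬝ᵥ (A k).mulVec w).re)
    (hqB : ∀ k, qB k = (star w ⬝ᵥ (B k).mulVec w).re)
    (r μ : Fin K → ℝ)
    (hr : ∀ k, r k = qAc k / qBc k)
    (hμ : ∀ k, μ k = r k ^ (-(1 / (τ * Real.log 2))) /
      ∑ l, r l ^ (-(1 / (τ * Real.log 2))))
    (lamNum lamDen : ℝ)
    (hlamNum : lamNum = ∏ k, qA k)
    (hlamDen : lamDen =
      ((1 / (K * Real.log 2)) * ∑ k, r k ^ (-(1 / τ))) ^ (τ / Real.log 2) * ∏ k, qB k)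
    (AKKT BKKT : Matrix (Fin n) (Fin n) ℂ)
    (hAKKT : AKKT = (lamNum : ℂ) •
      (∑ k, ((μ k / qAc k : ℝ) : ℂ) • Ac k + ∑ k, (((qA k)⁻¹ : ℝ) : ℂ) • A k))
    (hBKKT : BKKT = (lamDen : ℂ) •
      (∑ k, ((μ k / qBc k : ℝ) : ℂ) • Bc k + ∑ k, (((qB k)⁻¹ : ℝ) : ℂ) • B k)) :
    star w ⬝ᵥ AKKT.mulVec w = ((K : ℂ) + 1) * (lamNum : ℂ) ∧
      star w ⬝ᵥ BKKT.mulVec w = ((K : ℂ) + 1) * (lamDen : ℂ) ∧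
      ∀ lamHat : ℂ, AKKT.mulVec w = lamHat • BKKT.mulVec w →
        lamHat = ((lamNum / lamDen : ℝ) : ℂ) := by
  have : Nonempty (Fin K) := Fin.pos_iff_nonempty.mp hK
  obtain rfl : qAc = fun k => RSMA.reQuadForm (Ac k) w := funext hqAc
  obtain rfl : qBc = fun k => RSMA.reQuadForm (Bc k) w := funext hqBc
  obtain rfl : qA = fun k => RSMA.reQuadForm (A k) w := funext hqA
  obtain rfl : qB = fun k => RSMA.reQuadForm (B k) w := funext hqB
  obtain rfl : r = RSMA.commonRatio Ac Bc w := funext hr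
  obtain rfl : μ = RSMA.logSumExpWeight τ (RSMA.commonRatio Ac Bc w) := funext hμ
  obtain rfl : lamNum = RSMA.lamNum A w := hlamNum
  obtain rfl : lamDen = RSMA.lamDen τ (RSMA.commonRatio Ac Bc w) B w := by
    rw [hlamDen, RSMA.lamDen, Fintype.card_fin]
  obtain rfl : AKKT = RSMA.aKKT τ Ac Bc A w := hAKKT
  obtain rfl : BKKT = RSMA.bKKT τ Ac Bc B w := hBKKT
  have hgeneral := eigenvalue_equals_lambda_general
    (fun k => (hAcH k).dotProduct_mulVec_pos hw) (fun k => (hBcH k).dotProduct_mulVec_pos hw)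
    (fun k => (hAH k).dotProduct_mulVec_pos hw) (fun k => (hBH k).dotProduct_mulVec_pos hw) hτ.ne'
  rw [Fintype.card_fin] at hgeneral
  exact hgeneral
end
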